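/- Suppose ν_{f*|s} has finite second moment for each s ∈ 𝒮. If a measurable map f : ℝ^d × 𝒮 → ℝ^k satisfies distributional parity, i.e. ν_{f|s} is the same probability measure ν for every s ∈ 𝒮 (equivalently U(f) = 0), and ν has finite second moment, then E‖f*(X,S) − f(X,S)‖₂² ≥ min_{ν'} Σ_{s∈𝒮} p_s W₂²(ν_{f*|s}, ν') = U(f*). In particular the infimum of R(f) over all f with U(f) = 0 is at least U(f*). -/

import Mathlib

open MeasureTheory ProbabilityTheory ENNReal

noncomputable section

abbrev Euc (k : ℕ) : Type := EuclideanSpace ℝ (Fin k)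

/-- Squared Wasserstein-2 distance between measures on `ℝ^k`,
as the infimum over couplings of the expected squared Euclidean distance. -/
def W2sq {k : ℕ} (μ ν : Measure (Euc k)) : ℝ≥0∞ :=
  ⨅ γ ∈ {γ : Measure (Euc k × Euc k) |
      γ.map Prod.fst = μ ∧ γ.map Prod.snd = ν},
    ∫⁻ p, (‖p.1 - p.2‖₊ : ℝ≥0∞) ^ 2 ∂γ

/-- The law of `f (X, S)` conditional on `S = s`. -/
def condLaw {Ω : Type*} [MeasurableSpace Ω] {d k m : ℕ} (P : Measure Ω)
    (X : Ω → Euc d) (S : Ω → Fin m) (f : Euc d → Fin m → Euc k) (s : Fin m) :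
    Measure (Euc k) :=
  (ProbabilityTheory.cond P {ω | S ω = s}).map fun ω => f (X ω) (S ω)

/-- Finite second moment functional. -/
def secondMoment {k : ℕ} (μ : Measure (Euc k)) : ℝ≥0∞ :=
  ∫⁻ y, (‖y‖₊ : ℝ≥0∞) ^ 2 ∂μ

/-- The unfairness measure `U(f)`: the infimum over probability measures `ν` of the
weighted sum of squared Wasserstein-2 distances of the group-conditional laws to `ν`. -/
def unfairness {Ω : Type*} [MeasurableSpace Ω] {d k m : ℕ} (P : Measure Ω)
    (X : Ω → Euc d) (S : Ω → Fin m) (f : Euc d → Fin m → Euc k) : ℝ≥0∞ :=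
  ⨅ ν ∈ {ν : Measure (Euc k) | IsProbabilityMeasure ν},
    ∑ s : Fin m, P {ω | S ω = s} * W2sq (condLaw P X S f s) ν

/-- The risk `R(f) = E ‖f*(X,S) - f(X,S)‖²`. -/
def risk {Ω : Type*} [MeasurableSpace Ω] {d k m : ℕ} (P : Measure Ω)
    (X : Ω → Euc d) (S : Ω → Fin m) (fstar f : Euc d → Fin m → Euc k) : ℝ≥0∞ :=
  ∫⁻ ω, (‖fstar (X ω) (S ω) - f (X ω) (S ω)‖₊ : ℝ≥0∞) ^ 2 ∂P

/-!
Conditionally on `S = s`, the pair `(f*(X, S), f(X, S))` is a coupling of `ν_{f*|s}` and `ν_{f|s}`,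
so `W₂²(ν_{f*|s}, ν_{f|s}) ≤ E[‖f*(X, S) - f(X, S)‖² | S = s]`. Averaging over `s` gives
`Σ_s p_s W₂²(ν_{f*|s}, ν_{f|s}) ≤ R(f)`. Under parity every `ν_{f|s}` is the same `ν`, which then
competes in the infimum defining `U(f*)`.
-/

lemma W2sq_map_map_le {Ω : Type*} [MeasurableSpace Ω] {k : ℕ} {μ : Measure Ω} {u v : Ω → Euc k}
    (hu : AEMeasurable u μ) (hv : AEMeasurable v μ) :
    W2sq (μ.map u) (μ.map v) ≤ ∫⁻ ω, (‖u ω - v ω‖₊ : ℝ≥0∞) ^ 2 ∂μ :=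
  calc W2sq (μ.map u) (μ.map v)
      ≤ ∫⁻ p, (‖p.1 - p.2‖₊ : ℝ≥0∞) ^ 2 ∂(μ.map fun ω => (u ω, v ω)) :=
        iInf₂_le _ ⟨Measure.fst_map_prodMk₀ hv, Measure.snd_map_prodMk₀ hu⟩
    _ = ∫⁻ ω, (‖u ω - v ω‖₊ : ℝ≥0∞) ^ 2 ∂μ :=
        lintegral_map' (by fun_prop) (hu.prodMk hv)

lemma sum_meas_mul_lintegral_cond_fiber {Ω α : Type*} [MeasurableSpace Ω] [MeasurableSpace α]
    [Fintype α] [DiscreteMeasurableSpace α] {S : Ω → α} (hS : Measurable S)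
    (μ : Measure Ω) [IsFiniteMeasure μ] (g : Ω → ℝ≥0∞) :
    ∑ s, μ (S ⁻¹' {s}) * ∫⁻ ω, g ω ∂μ[|S ← s] = ∫⁻ ω, g ω ∂μ := by
  conv_rhs => rw [← sum_meas_smul_cond_fiber hS μ]
  simp only [lintegral_finsetSum_measure, lintegral_smul_measure, smul_eq_mul]

section Risk

variable {Ω : Type*} [MeasurableSpace Ω] {d k m : ℕ} {P : Measure Ω} {X : Ω → Euc d}
  {S : Ω → Fin m}

lemma sum_mul_W2sq_condLaw_le_risk [IsFiniteMeasure P] (hS : Measurable S)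
    {f g : Euc d → Fin m → Euc k} (hf : AEMeasurable (fun ω => f (X ω) (S ω)) P)
    (hg : AEMeasurable (fun ω => g (X ω) (S ω)) P) :
    ∑ s, P {ω | S ω = s} * W2sq (condLaw P X S f s) (condLaw P X S g s) ≤ risk P X S f g :=
  calc ∑ s, P {ω | S ω = s} * W2sq (condLaw P X S f s) (condLaw P X S g s)
      ≤ ∑ s, P {ω | S ω = s} *
          ∫⁻ ω, (‖f (X ω) (S ω) - g (X ω) (S ω)‖₊ : ℝ≥0∞) ^ 2 ∂P[|S ← s] := by
        gcongr with s
        exact W2sq_map_map_le (hf.mono_ac cond_absolutelyContinuous)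
          (hg.mono_ac cond_absolutelyContinuous)
    _ = risk P X S f g := sum_meas_mul_lintegral_cond_fiber hS P _

lemma unfairness_le_sum_mul_W2sq (f : Euc d → Fin m → Euc k) (ν : Measure (Euc k))
    [IsProbabilityMeasure ν] :
    unfairness P X S f ≤ ∑ s, P {ω | S ω = s} * W2sq (condLaw P X S f s) ν :=
  iInf₂_le ν ‹_›

theorem risk_ge_unfairness_of_parity_general [IsFiniteMeasure P] (hS : Measurable S)
    {fstar f : Euc d → Fin m → Euc k}
    (hfstar : AEMeasurable (fun ω => fstar (X ω) (S ω)) P)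
    (hf : AEMeasurable (fun ω => f (X ω) (S ω)) P)
    (ν : Measure (Euc k)) [IsProbabilityMeasure ν] (hparity : ∀ s, condLaw P X S f s = ν) :
    unfairness P X S fstar ≤ risk P X S fstar f :=
  calc unfairness P X S fstar
      ≤ ∑ s, P {ω | S ω = s} * W2sq (condLaw P X S fstar s) ν :=
        unfairness_le_sum_mul_W2sq fstar ν
    _ = ∑ s, P {ω | S ω = s} * W2sq (condLaw P X S fstar s) (condLaw P X S f s) := by
        simp only [hparity]
    _ ≤ risk P X S fstar f := sum_mul_W2sq_condLaw_le_risk hS hfstar hf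

end Risk

/-- If `f` satisfies distributional parity, i.e. all its group-conditional
laws equal a common probability measure `ν` with finite second moment, then
`R(f) = E‖f*(X,S) - f(X,S)‖² ≥ min_ν' Σ_s p_s W₂²(ν_{f*|s}, ν') = U(f*)`. -/
theorem risk_ge_unfairness_of_parity {d k m : ℕ} {Ω : Type*} [MeasurableSpace Ω]
    (P : Measure Ω) [IsProbabilityMeasure P]
    (X : Ω → Euc d) (S : Ω → Fin m) (hX : Measurable X) (hS : Measurable S)
    (hps : ∀ s : Fin m, 0 < P {ω | S ω = s})
    (fstar f : Euc d → Fin m → Euc k)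
    (hfstar : Measurable fun ω => fstar (X ω) (S ω))
    (hf : Measurable fun ω => f (X ω) (S ω))
    (hmomstar : ∀ s : Fin m, secondMoment (condLaw P X S fstar s) < ⊤)
    (ν : Measure (Euc k)) (hν : IsProbabilityMeasure ν)
    (hνmom : secondMoment ν < ⊤)
    (hparity : ∀ s : Fin m, condLaw P X S f s = ν) :
    unfairness P X S fstar ≤ risk P X S fstar f :=
  risk_ge_unfairness_of_parity_general hS hfstar.aemeasurable hf.aemeasurable ν hparity

end
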